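/- Let d ≥ 3, β = β_c, and for each n ≥ 3 let m_n² be the unique m² > 0 satisfying n^{−d} Σ_{w ∈ {0,…,n−1}^d} 1/(m² + η_w) = β_c. Then m_n² → 0 as n → ∞, and for all x, y ∈ ℤ^d, G_{n,m_n²}(x̄, ȳ) → G_{ℤ^d}(x,y) as n → ∞. -/

import Mathlib

open MeasureTheory ProbabilityTheory Filter Topology Matrix
open scoped Classical ENNReal

noncomputable section

/-- The massive lattice Green's function `G_{ℤ^d, m²}(x, y)`. -/
def massGreenZ (d : ℕ) (m2 : ℝ) (x y : Fin d → ℤ) : ℝ :=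
  ∫ t in Set.Icc (0 : Fin d → ℝ) 1,
    Real.cos (2 * Real.pi * ∑ i, ((x i : ℝ) - (y i : ℝ)) * t i) /
      (m2 + 2 * ∑ i, (1 - Real.cos (2 * Real.pi * t i)))

/-- The lattice Green's function `G_{ℤ^d}(x, y)` (for `d ≥ 3`). -/
def greenZ (d : ℕ) (x y : Fin d → ℤ) : ℝ := massGreenZ d 0 x y

/-- The critical inverse temperature `β_c = G_{ℤ^d}(0, 0)`. -/
def betaC (d : ℕ) : ℝ := greenZ d 0 0

/-- The eigenvalues `η_w = 2 ∑_i (1 − cos(2π w_i / n))` of the discrete Laplacian on the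
torus `T_n^d`. -/
def eta (d n : ℕ) (w : Fin d → Fin n) : ℝ :=
  2 * ∑ i, (1 - Real.cos (2 * Real.pi * ((w i : ℕ) : ℝ) / n))

/-- The massive Green's function `G_{n,m²}(x,y)` on the torus `T_n^d`. -/
def torusGreen (d n : ℕ) (m2 : ℝ) (x y : Fin d → ZMod n) : ℝ :=
  (1 / (n : ℝ) ^ d) * ∑ w : Fin d → Fin n,
    Real.cos (2 * Real.pi * (∑ i, ((w i : ℕ) : ℝ) * ((x i - y i).val : ℝ)) / n) /
      (m2 + eta d n w)

/-- The zero-average Green's function `G_n^0(x,y)` on the torus `T_n^d` (`d ≥ 3`). -/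
def torusGreen0 (d n : ℕ) (x y : Fin d → ZMod n) : ℝ :=
  (1 / (n : ℝ) ^ d) *
    ∑ w ∈ Finset.univ.filter (fun w : Fin d → Fin n => ∃ i, (w i : ℕ) ≠ 0),
      Real.cos (2 * Real.pi * (∑ i, ((w i : ℕ) : ℝ) * ((x i - y i).val : ℝ)) / n) / eta d n w

/-- The half-open box of side `1/n` at the lattice point `w/n`. -/
def hbox (d n : ℕ) (w : Fin d → Fin n) : Set (Fin d → ℝ) :=
  Set.pi Set.univ (fun i => Set.Ico (((w i : ℕ) : ℝ) / n) ((((w i : ℕ) : ℝ) + 1) / n))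

/-- Rounding down to the lattice of mesh `1/n`. -/
def hfl (d n : ℕ) (t : Fin d → ℝ) : Fin d → ℝ := fun i => (⌊t i * n⌋₊ : ℝ) / n

/-- The symbol of the Laplacian. -/
def hsym (d : ℕ) (t : Fin d → ℝ) : ℝ := 2 * ∑ i, (1 - Real.cos (2 * Real.pi * t i))

lemma hbox_floor {d n : ℕ} (hn : 0 < n) {w : Fin d → Fin n} {t : Fin d → ℝ}
    (ht : t ∈ hbox d n w) (i : Fin d) : ⌊t i * n⌋₊ = (w i : ℕ) := by
  have h := ht i (Set.mem_univ i)
  have hn' : (0 : ℝ) < n := by exact_mod_cast hn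
  rw [Set.mem_Ico, div_le_iff₀ hn', lt_div_iff₀ hn'] at h
  rw [Nat.floor_eq_iff (le_trans (by positivity) h.1)]
  exact h

lemma hbox_union {d n : ℕ} (hn : 0 < n) :
    (⋃ w, hbox d n w) = Set.pi Set.univ (fun _ : Fin d => Set.Ico (0 : ℝ) 1) := by
  have hn' : (0 : ℝ) < n := by exact_mod_cast hn
  ext t
  simp only [Set.mem_iUnion, hbox, Set.mem_pi, Set.mem_univ, true_implies, Set.mem_Ico]
  constructor
  · rintro ⟨w, hw⟩ i
    refine ⟨le_trans (by positivity) (hw i).1, lt_of_lt_of_le (hw i).2 ?_⟩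
    rw [div_le_one hn']
    exact_mod_cast (w i).2
  · intro h
    have hlt : ∀ i, ⌊t i * n⌋₊ < n := fun i => by
      rw [Nat.floor_lt (mul_nonneg (h i).1 hn'.le)]
      nlinarith [(h i).2]
    refine ⟨fun i => ⟨⌊t i * n⌋₊, hlt i⟩, fun i => ?_⟩
    rw [div_le_iff₀ hn', lt_div_iff₀ hn']
    exact ⟨Nat.floor_le (mul_nonneg (h i).1 hn'.le), Nat.lt_floor_add_one _⟩

lemma hbox_vol {d n : ℕ} (w : Fin d → Fin n) :
    (volume : Measure (Fin d → ℝ)).real (hbox d n w) = 1 / (n : ℝ) ^ d := by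
  unfold hbox Measure.real
  rw [Real.volume_pi_Ico_toReal]
  · simp [add_div]
  · intro i
    show _ / _ ≤ _ / _
    gcongr
    linarith

lemma riemann_eq {d n : ℕ} (hn : 0 < n) (h : (Fin d → ℝ) → ℝ) :
    (1 / (n : ℝ) ^ d) * ∑ w : Fin d → Fin n, h (fun i => ((w i : ℕ) : ℝ) / n)
      = ∫ t in Set.Icc (0 : Fin d → ℝ) 1, h (hfl d n t) := by
  have hae : (⋃ w, hbox d n w) =ᵐ[volume] Set.Icc (0 : Fin d → ℝ) 1 := by
    rw [hbox_union hn]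
    exact Measure.univ_pi_Ico_ae_eq_Icc (f := (0 : Fin d → ℝ)) (g := 1)
  have hm : ∀ w, MeasurableSet (hbox d n w) := fun w =>
    MeasurableSet.univ_pi fun i => measurableSet_Ico
  have heq : ∀ w, Set.EqOn (fun t => h (hfl d n t)) (fun _ => h (fun i => ((w i : ℕ) : ℝ) / n))
      (hbox d n w) := fun w t ht => by
    show h _ = h _
    congr 1
    funext i
    rw [hfl, hbox_floor hn ht i]
  have hfin : ∀ w, volume (hbox d n w) ≠ ⊤ := fun w => by
    unfold hbox
    rw [Real.volume_pi_Ico]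
    exact ENNReal.prod_ne_top (fun i _ => ENNReal.ofReal_ne_top)
  rw [← setIntegral_congr_set hae, integral_iUnion_fintype hm, Finset.mul_sum]
  · refine Finset.sum_congr rfl fun w _ => ?_
    rw [setIntegral_congr_fun (hm w) (heq w), setIntegral_const, hbox_vol, smul_eq_mul]
  · intro w w' hww
    rw [Function.onFun, Set.disjoint_left]
    intro t ht ht'
    apply hww
    funext i
    apply Fin.ext
    rw [← hbox_floor hn ht i, ← hbox_floor hn ht' i]
  · intro w
    rw [integrableOn_congr_fun (heq w) (hm w)]
    exact integrableOn_const (hfin w)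

lemma hfl_tendsto {d : ℕ} {t : Fin d → ℝ} (ht : ∀ i, 0 ≤ t i) :
    Tendsto (fun n : ℕ => hfl d n t) atTop (𝓝 t) := by
  rw [tendsto_pi_nhds]
  intro i
  exact (tendsto_nat_floor_mul_div_atTop (ht i)).comp tendsto_natCast_atTop_atTop

lemma hfl_meas (d n : ℕ) : Measurable (hfl d n) := by
  unfold hfl
  refine measurable_pi_lambda _ fun i => ?_
  have : Measurable (fun t : Fin d → ℝ => ⌊t i * n⌋₊) :=
    Nat.measurable_floor.comp (by fun_prop)
  exact (measurable_from_top.comp this).div_const _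

lemma ae_open_cube (d : ℕ) : ∀ᵐ t ∂(volume.restrict (Set.Icc (0 : Fin d → ℝ) 1)),
    ∀ i, t i ∈ Set.Ioo (0 : ℝ) 1 := by
  have hae : Set.pi Set.univ (fun _ : Fin d => Set.Ioo (0 : ℝ) 1) =ᵐ[volume]
      Set.Icc (0 : Fin d → ℝ) 1 :=
    Measure.univ_pi_Ioo_ae_eq_Icc (f := (0 : Fin d → ℝ)) (g := 1)
  rw [← Measure.restrict_congr_set hae]
  filter_upwards [ae_restrict_mem (MeasurableSet.univ_pi fun i => measurableSet_Ioo)] with t ht i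
  exact ht i (Set.mem_univ i)

lemma riemann_tendsto {d : ℕ} (g : ℕ → (Fin d → ℝ) → ℝ) (G : (Fin d → ℝ) → ℝ) (C : ℝ)
    (hg : ∀ n, Measurable (g n)) (hC : ∀ᶠ n in atTop, ∀ t, |g n t| ≤ C)
    (hlim : ∀ t : Fin d → ℝ, (∀ i, t i ∈ Set.Ioo (0 : ℝ) 1) →
      Tendsto (fun n => g n (hfl d n t)) atTop (𝓝 (G t))) :
    Tendsto (fun n : ℕ => (1 / (n : ℝ) ^ d) *
      ∑ w : Fin d → Fin n, g n (fun i => ((w i : ℕ) : ℝ) / n)) atTop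
      (𝓝 (∫ t in Set.Icc (0 : Fin d → ℝ) 1, G t)) := by
  have key : Tendsto (fun n : ℕ => ∫ t in Set.Icc (0 : Fin d → ℝ) 1, g n (hfl d n t)) atTop
      (𝓝 (∫ t in Set.Icc (0 : Fin d → ℝ) 1, G t)) := by
    refine tendsto_integral_filter_of_dominated_convergence (fun _ => C) ?_ ?_ ?_ ?_
    · exact Eventually.of_forall fun n => ((hg n).comp (hfl_meas d n)).aestronglyMeasurable
    · filter_upwards [hC] with n hn
      exact Eventually.of_forall fun t => hn _
    · exact integrableOn_const (isCompact_Icc.measure_lt_top.ne)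
    · filter_upwards [ae_open_cube d] with t ht
      exact hlim t ht
  refine key.congr' ?_
  filter_upwards [eventually_gt_atTop 0] with n hn
  exact (riemann_eq hn (g n)).symm

lemma hsym_cont (d : ℕ) : Continuous (hsym d) := by
  unfold hsym; fun_prop

lemma hsym_nonneg {d : ℕ} (t : Fin d → ℝ) : 0 ≤ hsym d t := by
  unfold hsym
  exact mul_nonneg zero_le_two (Finset.sum_nonneg fun i _ => by linarith [Real.cos_le_one (2 * Real.pi * t i)])

lemma one_sub_cos (a : ℝ) : 1 - Real.cos (2 * a) = 2 * Real.sin a ^ 2 := by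
  rw [Real.cos_two_mul, Real.cos_sq']; ring

lemma hsym_eq {d : ℕ} (t : Fin d → ℝ) : hsym d t = 4 * ∑ i, Real.sin (Real.pi * t i) ^ 2 := by
  unfold hsym
  rw [Finset.mul_sum, Finset.mul_sum]
  refine Finset.sum_congr rfl fun i _ => ?_
  rw [mul_assoc, one_sub_cos]; ring

lemma hsym_pos {d : ℕ} (hd : 0 < d) {t : Fin d → ℝ} (ht : ∀ i, t i ∈ Set.Ioo (0 : ℝ) 1) :
    0 < hsym d t := by
  rw [hsym_eq]
  have : 0 < ∑ i, Real.sin (Real.pi * t i) ^ 2 := by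
    refine Finset.sum_pos (fun i _ => ?_) ⟨⟨0, hd⟩, Finset.mem_univ _⟩
    have := Real.sin_pos_of_pos_of_lt_pi (mul_pos Real.pi_pos (ht i).1)
      (by nlinarith [Real.pi_pos, (ht i).2])
    positivity
  linarith

lemma abs_sin_add (a b : ℝ) : |Real.sin (a + b)| ≤ |Real.sin a| + |Real.sin b| := by
  rw [Real.sin_add]
  refine (abs_add_le _ _).trans ?_
  rw [abs_mul, abs_mul]
  nlinarith [Real.abs_cos_le_one a, Real.abs_cos_le_one b, abs_nonneg (Real.sin a),
    abs_nonneg (Real.sin b)]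

lemma abs_sin_nat (k : ℕ) (a : ℝ) : |Real.sin (k * a)| ≤ k * |Real.sin a| := by
  induction k with
  | zero => simp
  | succ k ih =>
    push_cast
    rw [add_mul, one_mul]
    refine (abs_sin_add _ _).trans ?_
    linarith

lemma abs_sin_int (k : ℤ) (a : ℝ) : |Real.sin (k * a)| ≤ |(k : ℝ)| * |Real.sin a| := by
  obtain ⟨m, rfl | rfl⟩ := k.eq_nat_or_neg
  · simpa using abs_sin_nat m a
  · simpa using abs_sin_nat m a

lemma abs_sin_sum {ι : Type*} (s : Finset ι) (a : ι → ℝ) :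
    |Real.sin (∑ i ∈ s, a i)| ≤ ∑ i ∈ s, |Real.sin (a i)| := by
  induction s using Finset.induction_on with
  | empty => simp
  | insert i s hi ih =>
    rw [Finset.sum_insert hi, Finset.sum_insert hi]
    exact (abs_sin_add _ _).trans (by linarith)

/-- The oscillating phase. -/
def hph (d : ℕ) (k : Fin d → ℤ) (t : Fin d → ℝ) : ℝ :=
  Real.cos (2 * Real.pi * ∑ i, (k i : ℝ) * t i)

lemma hph_cont (d : ℕ) (k : Fin d → ℤ) : Continuous (hph d k) := by
  unfold hph; fun_prop

lemma hph_bound {d : ℕ} (k : Fin d → ℤ) (t : Fin d → ℝ) :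
    1 - hph d k t ≤ (∑ i, (k i : ℝ) ^ 2) * hsym d t := by
  unfold hph
  rw [mul_assoc, one_sub_cos, hsym_eq, Finset.mul_sum]
  have h1 : |Real.sin (∑ i, Real.pi * ((k i : ℝ) * t i))|
      ≤ ∑ i, |(k i : ℝ)| * |Real.sin (Real.pi * t i)| := by
    refine (abs_sin_sum _ _).trans (Finset.sum_le_sum fun i _ => ?_)
    have := abs_sin_int (k i) (Real.pi * t i)
    rwa [mul_left_comm] at this
  have h2 : (∑ i, |(k i : ℝ)| * |Real.sin (Real.pi * t i)|) ^ 2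
      ≤ (∑ i, (k i : ℝ) ^ 2) * ∑ i, Real.sin (Real.pi * t i) ^ 2 := by
    have := Finset.sum_mul_sq_le_sq_mul_sq Finset.univ (fun i => |(k i : ℝ)|)
      (fun i => |Real.sin (Real.pi * t i)|)
    simpa only [sq_abs] using this
  have h3 : Real.sin (∑ i, Real.pi * ((k i : ℝ) * t i)) ^ 2
      ≤ (∑ i, |(k i : ℝ)| * |Real.sin (Real.pi * t i)|) ^ 2 := by
    rw [← sq_abs]
    gcongr
  have h4 : 0 ≤ (∑ i, (k i : ℝ) ^ 2) * ∑ i, Real.sin (Real.pi * t i) ^ 2 := by positivity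
  nlinarith

lemma eta_eq {d n : ℕ} (w : Fin d → Fin n) :
    eta d n w = hsym d (fun i => ((w i : ℕ) : ℝ) / n) := by
  unfold eta hsym
  simp only [mul_div_assoc]

lemma phase_eq {d n : ℕ} (hn : 0 < n) (x y : Fin d → ℤ) (w : Fin d → Fin n) :
    Real.cos (2 * Real.pi * (∑ i, ((w i : ℕ) : ℝ) *
      ((((x i : ZMod n) - (y i : ZMod n))).val : ℝ)) / n)
      = hph d (fun i => x i - y i) (fun i => ((w i : ℕ) : ℝ) / n) := by
  haveI : NeZero n := ⟨hn.ne'⟩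
  have hn' : (n : ℝ) ≠ 0 := by exact_mod_cast hn.ne'
  have h : ∀ i, ∃ q : ℤ, ((((x i : ZMod n) - (y i : ZMod n))).val : ℝ)
      = ((x i - y i : ℤ) : ℝ) + q * n := fun i => by
    have h1 : (((((x i : ZMod n) - (y i : ZMod n))).val : ℤ) : ZMod n) = ((x i - y i : ℤ) : ZMod n) := by
      simp
    rw [ZMod.intCast_eq_intCast_iff_dvd_sub] at h1
    obtain ⟨q, hq⟩ := h1
    refine ⟨-q, ?_⟩
    have h2 : ((((x i : ZMod n) - (y i : ZMod n))).val : ℤ) = (x i - y i) + (-q) * n := by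
      linarith
    exact_mod_cast h2
  choose q hq using h
  unfold hph
  have : 2 * Real.pi * (∑ i, ((w i : ℕ) : ℝ) *
      ((((x i : ZMod n) - (y i : ZMod n))).val : ℝ)) / n
      = 2 * Real.pi * (∑ i, ((x i - y i : ℤ) : ℝ) * (((w i : ℕ) : ℝ) / n))
        + ((∑ i, ((w i : ℕ) : ℤ) * q i : ℤ) : ℝ) * (2 * Real.pi) := by
    push_cast
    rw [mul_comm (∑ i, ((w i : ℕ) : ℝ) * (q i : ℝ)), ← mul_add, ← Finset.sum_add_distrib,
      mul_div_assoc, Finset.sum_div]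
    congr 1
    refine Finset.sum_congr rfl fun i _ => ?_
    rw [hq i]
    push_cast
    field_simp
  rw [this, Real.cos_add_int_mul_two_pi]

lemma betaC_eq (d : ℕ) : betaC d = ∫ t in Set.Icc (0 : Fin d → ℝ) 1, 1 / hsym d t := by
  unfold betaC greenZ massGreenZ hsym
  simp

lemma greenZ_eq (d : ℕ) (x y : Fin d → ℤ) : greenZ d x y =
    ∫ t in Set.Icc (0 : Fin d → ℝ) 1, hph d (fun i => x i - y i) t / hsym d t := by
  unfold greenZ massGreenZ hsym hph
  simp

/-- Critical asymptotics of the torus mass and Green's function: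
for `d ≥ 3`, `β = β_c`, and `m_n²` the unique positive solution of
`n^{-d} ∑_w 1/(m² + η_w) = β_c`, one has `m_n² → 0` and
`G_{n,m_n²}(x̄,ȳ) → G_{ℤ^d}(x,y)` for all `x, y ∈ ℤ^d`. -/
theorem torus_mass_critical_asymptotics
    (d : ℕ) (hd : 3 ≤ d) (m2 : ℕ → ℝ)
    (hm2 : ∀ n : ℕ, 3 ≤ n → 0 < m2 n ∧
      (1 / (n : ℝ) ^ d) * ∑ w : Fin d → Fin n, 1 / (m2 n + eta d n w) = betaC d) :
    Tendsto (fun n : ℕ => m2 n) atTop (nhds 0) ∧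
    ∀ x y : Fin d → ℤ,
      Tendsto
        (fun n : ℕ => torusGreen d n (m2 n)
          (fun i => (x i : ZMod n)) (fun i => (y i : ZMod n)))
        atTop (nhds (greenZ d x y)) := by
  have hd0 : 0 < d := by omega
  -- positivity of the left-hand side shows that `1/η` is integrable
  have hbpos : 0 < betaC d := by
    obtain ⟨hm, he⟩ := hm2 3 le_rfl
    rw [← he]
    refine mul_pos (by positivity) (Finset.sum_pos (fun w _ => ?_) ⟨fun _ => 0, Finset.mem_univ _⟩)
    rw [eta_eq]
    have := hsym_nonneg (d := d) (fun i => ((w i : ℕ) : ℝ) / (3 : ℕ))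
    positivity
  have hint : IntegrableOn (fun t => 1 / hsym d t) (Set.Icc (0 : Fin d → ℝ) 1) := by
    by_contra hc
    rw [betaC_eq, integral_undef hc] at hbpos
    exact lt_irrefl _ hbpos
  have hm0 : Tendsto (fun n : ℕ => m2 n) atTop (nhds 0) := by
    rw [Metric.tendsto_atTop']
    by_contra hc
    push Not at hc
    obtain ⟨ε, hε, hc⟩ := hc
    have hlim := riemann_tendsto (d := d) (fun _ t => 1 / (ε + hsym d t))
      (fun t => 1 / (ε + hsym d t)) (1 / ε)
      (fun _ => by have := (hsym_cont d).measurable; fun_prop)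
      (Eventually.of_forall fun _ t => by
        have := hsym_nonneg t
        rw [abs_of_nonneg (by positivity)]
        gcongr
        linarith)
      (fun t ht => by
        have h1 := ((hsym_cont d).tendsto t).comp (hfl_tendsto fun i => (ht i).1.le)
        refine (tendsto_const_nhds (x := (1 : ℝ))).div (h1.const_add ε) ?_
        have := hsym_nonneg t
        positivity)
    have hint2 : IntegrableOn (fun t => 1 / (ε + hsym d t)) (Set.Icc (0 : Fin d → ℝ) 1) := by
      refine ContinuousOn.integrableOn_compact isCompact_Icc ?_
      refine Continuous.continuousOn ?_
      refine continuous_const.div (continuous_const.add (hsym_cont d)) fun t => ?_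
      have := hsym_nonneg t
      positivity
    have hlt : ∫ t in Set.Icc (0 : Fin d → ℝ) 1, 1 / (ε + hsym d t) < betaC d := by
      rw [betaC_eq, ← sub_pos, ← integral_sub hint hint2]
      have hp : ∀ᵐ t ∂(volume.restrict (Set.Icc (0 : Fin d → ℝ) 1)),
          0 < 1 / hsym d t - 1 / (ε + hsym d t) := by
        filter_upwards [ae_open_cube d] with t ht
        have := hsym_pos hd0 ht
        rw [sub_pos]
        gcongr
        linarith
      rw [integral_pos_iff_support_of_nonneg_ae (hp.mono fun t h => h.le) (hint.sub hint2)]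
      have hs : Function.support (fun t : Fin d → ℝ => 1 / hsym d t - 1 / (ε + hsym d t))
          =ᵐ[volume.restrict (Set.Icc (0 : Fin d → ℝ) 1)] Set.univ := by
        rw [ae_eq_univ]
        refine measure_mono_null ?_ (ae_iff.1 hp)
        intro t ht h
        exact ht h.ne'
      rw [measure_congr hs, Measure.restrict_apply_univ, Real.volume_Icc_pi]
      simp
    have hev := hlim.eventually_lt_const hlt
    rw [eventually_atTop] at hev
    obtain ⟨N, hN⟩ := hev
    obtain ⟨n, hn, hmn⟩ := hc (max N 3)
    have hn3 : 3 ≤ n := (le_max_right N 3).trans hn.le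
    have hnN := hN n ((le_max_left N 3).trans hn.le)
    obtain ⟨hm, he⟩ := hm2 n hn3
    rw [Real.dist_eq, sub_zero, abs_of_pos hm] at hmn
    rw [← he] at hnN
    refine absurd hnN (not_lt.2 ?_)
    refine mul_le_mul_of_nonneg_left (Finset.sum_le_sum fun w _ => ?_) (by positivity)
    rw [eta_eq]
    have := hsym_nonneg (d := d) (fun i => ((w i : ℕ) : ℝ) / n)
    gcongr
  refine ⟨hm0, fun x y => ?_⟩
  set k : Fin d → ℤ := fun i => x i - y i with hk
  have hK : (0 : ℝ) ≤ ∑ i, (k i : ℝ) ^ 2 := by positivity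
  have hlim := riemann_tendsto (d := d) (fun n t => (1 - hph d k t) / (m2 n + hsym d t))
    (fun t => (1 - hph d k t) / hsym d t) (∑ i, (k i : ℝ) ^ 2)
    (fun n => by
      have := (hsym_cont d).measurable
      have := (hph_cont d k).measurable
      fun_prop)
    (by
      filter_upwards [eventually_ge_atTop 3] with n hn t
      have hm := (hm2 n hn).1
      have h0 := hsym_nonneg t
      have h1 : 0 ≤ 1 - hph d k t := by unfold hph; linarith [Real.cos_le_one (2 * Real.pi * ∑ i, (k i : ℝ) * t i)]
      rw [abs_of_nonneg (by positivity), div_le_iff₀ (by positivity)]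
      refine (hph_bound k t).trans ?_
      gcongr
      linarith)
    (fun t ht => by
      have h0 := hfl_tendsto (d := d) fun i => (ht i).1.le
      have h1 := ((hsym_cont d).tendsto t).comp h0
      have h2 := ((hph_cont d k).tendsto t).comp h0
      have h3 := hm0.add h1
      rw [zero_add] at h3
      exact (h2.const_sub 1).div h3 (hsym_pos hd0 ht).ne')
  have hintc : IntegrableOn (fun t => hph d k t / hsym d t) (Set.Icc (0 : Fin d → ℝ) 1) := by
    refine Integrable.mono hint ?_ (Eventually.of_forall fun t => ?_)
    · exact ((hph_cont d k).measurable.div (hsym_cont d).measurable).aestronglyMeasurable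
    · rw [norm_div, norm_div, norm_one]
      gcongr
      exact Real.abs_cos_le_one _
  have hG : ∫ t in Set.Icc (0 : Fin d → ℝ) 1, (1 - hph d k t) / hsym d t
      = betaC d - greenZ d x y := by
    rw [betaC_eq, greenZ_eq, ← integral_sub hint hintc]
    simp only [sub_div]
  rw [hG] at hlim
  have hfin := hlim.const_sub (betaC d)
  rw [sub_sub_cancel] at hfin
  refine hfin.congr' ?_
  filter_upwards [eventually_ge_atTop 3] with n hn
  rw [← (hm2 n hn).2, ← mul_sub, ← Finset.sum_sub_distrib]
  unfold torusGreen
  congr 1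
  refine Finset.sum_congr rfl fun w _ => ?_
  rw [phase_eq (by omega) x y w, eta_eq, ← sub_div, sub_sub_cancel]


end
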